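/- arXiv:2205.09621 — 2 statements merged into one kernel-verified Lean document; each statement's English description precedes it below -/
import Mathlib

section
/- Let G : [0,∞) → [0,∞) be a convex, differentiable Young function with G' = g. Then for all a, b ∈ ℝ, (1/2)·(g(|b|)·sgn(b) − g(|a|)·sgn(a))·(b − a) ≥ G(|b|) + G(|a|) − 2·G(|(a + b)/2|). -/
open MeasureTheory Real Set

/-- A Young function `G` with density `g`: `G(t) = ∫₀ᵗ g(r) dr`, where `g` is
right-continuous, non-decreasing on `[0,∞)`, positive on `(0,∞)`, vanishes at `0`
and diverges at infinity. -/
structure IsYoung (G g : ℝ → ℝ) : Prop where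
  g_nonneg : ∀ t, 0 ≤ t → 0 ≤ g t
  g_zero : g 0 = 0
  g_pos : ∀ t, 0 < t → 0 < g t
  g_mono : MonotoneOn g (Set.Ici 0)
  g_rightCont : ∀ t, 0 ≤ t → ContinuousWithinAt g (Set.Ici t) t
  g_tendsto : Filter.Tendsto g Filter.atTop Filter.atTop
  G_eq : ∀ t, 0 ≤ t → G t = ∫ r in (0:ℝ)..t, g r

/-- Condition (L): `g` is differentiable on `(0,∞)` and
`p⁻ - 1 ≤ t g'(t)/g(t) ≤ p⁺ - 1` there, with `1 < p⁻ ≤ p⁺ < ∞`. -/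
def CondL (g : ℝ → ℝ) (pm pp : ℝ) : Prop :=
  1 < pm ∧ pm ≤ pp ∧
    ∀ t : ℝ, 0 < t → DifferentiableAt ℝ g t ∧
      pm - 1 ≤ t * deriv g t / g t ∧ t * deriv g t / g t ≤ pp - 1

/-!
Since `g` is non-decreasing, `G t - G s = ∫ r in s..t, g r ≥ g s * (t - s)`, so `g s` is a
subgradient of `G` at `s`. As `g` is nonnegative, the Cauchy–Schwarz inequality makes `g ‖x‖` times
the direction of `x` a subgradient of `x ↦ G ‖x‖`. Adding the subgradient inequalities at `a` and
`b`, both tested at the midpoint, gives the result; on the real line the direction of `x` is its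
sign.
-/

theorem mul_sub_le_integral_of_monotoneOn {g : ℝ → ℝ} {s t : ℝ} (hg : MonotoneOn g (uIcc s t)) :
    g s * (t - s) ≤ ∫ r in s..t, g r := by
  have hconst : ∫ _ in s..t, g s = g s * (t - s) := by simp [mul_comm]
  rcases le_total s t with hst | hts
  · rw [← hconst]
    refine intervalIntegral.integral_mono_on hst (by simp) hg.intervalIntegrable fun r hr ↦ ?_
    exact hg left_mem_uIcc (Icc_subset_uIcc hr) hr.1
  · rw [← hconst, intervalIntegral.integral_symm t s, intervalIntegral.integral_symm t s,
      neg_le_neg_iff]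
    refine intervalIntegral.integral_mono_on hts hg.intervalIntegrable.symm (by simp) fun r hr ↦ ?_
    exact hg (Icc_subset_uIcc' hr) left_mem_uIcc hr.2

theorem add_mul_sub_le_of_eq_integral {G g : ℝ → ℝ} (hmono : MonotoneOn g (Ici 0))
    (hG : ∀ t, 0 ≤ t → G t = ∫ r in (0 : ℝ)..t, g r) {s t : ℝ} (hs : 0 ≤ s) (ht : 0 ≤ t) :
    G s + g s * (t - s) ≤ G t := by
  have hmono' {u v : ℝ} (hu : 0 ≤ u) (hv : 0 ≤ v) : MonotoneOn g (uIcc u v) :=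
    hmono.mono (ordConnected_Ici.uIcc_subset hu hv)
  calc
    G s + g s * (t - s) ≤ (∫ r in (0 : ℝ)..s, g r) + ∫ r in s..t, g r := by
      rw [hG s hs]
      gcongr
      exact mul_sub_le_integral_of_monotoneOn (hmono' hs ht)
    _ = G t := by
      rw [hG t ht, intervalIntegral.integral_add_adjacent_intervals
        (hmono' le_rfl hs).intervalIntegrable (hmono' hs ht).intervalIntegrable]

theorem real_normalize_eq_sign (x : ℝ) : NormedSpace.normalize x = Real.sign x := by
  rcases lt_trichotomy x 0 with hx | rfl | hx
  · simp [NormedSpace.normalize, abs_of_neg hx, hx.ne, Real.sign_of_neg hx, inv_neg]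
  · simp
  · simp [NormedSpace.normalize, abs_of_pos hx, hx.ne', Real.sign_of_pos hx]

section InnerProductSpace

open scoped InnerProductSpace

variable {E : Type*} [NormedAddCommGroup E] [InnerProductSpace ℝ E] {G g : ℝ → ℝ}

theorem inner_normalize_sub_le_norm_sub_norm (x y : E) :
    ⟪NormedSpace.normalize x, y - x⟫_ℝ ≤ ‖y‖ - ‖x‖ := by
  rcases eq_or_ne x 0 with rfl | hx
  · simp
  have hxx : ⟪NormedSpace.normalize x, x⟫_ℝ = ‖x‖ := by
    rw [NormedSpace.normalize, real_inner_smul_left, real_inner_self_eq_norm_mul_norm,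
      inv_mul_cancel_left₀ (norm_ne_zero_iff.mpr hx)]
  have hxy : ⟪NormedSpace.normalize x, y⟫_ℝ ≤ ‖y‖ := by
    simpa [NormedSpace.norm_normalize hx] using real_inner_le_norm (NormedSpace.normalize x) y
  rw [inner_sub_right, hxx]
  gcongr

theorem add_inner_smul_normalize_sub_le_comp_norm (hg₀ : 0 ≤ g 0) (hmono : MonotoneOn g (Ici 0))
    (hG : ∀ t, 0 ≤ t → G t = ∫ r in (0 : ℝ)..t, g r) (x y : E) :
    G ‖x‖ + ⟪g ‖x‖ • NormedSpace.normalize x, y - x⟫_ℝ ≤ G ‖y‖ := by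
  have hgx : 0 ≤ g ‖x‖ := hg₀.trans (hmono self_mem_Ici (norm_nonneg x) (norm_nonneg x))
  calc
    G ‖x‖ + ⟪g ‖x‖ • NormedSpace.normalize x, y - x⟫_ℝ ≤ G ‖x‖ + g ‖x‖ * (‖y‖ - ‖x‖) := by
      rw [real_inner_smul_left]
      gcongr
      exact inner_normalize_sub_le_norm_sub_norm x y
    _ ≤ G ‖y‖ := add_mul_sub_le_of_eq_integral hmono hG (norm_nonneg x) (norm_nonneg y)

theorem convexity_inequality_general (hg₀ : 0 ≤ g 0) (hmono : MonotoneOn g (Ici 0))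
    (hG : ∀ t, 0 ≤ t → G t = ∫ r in (0 : ℝ)..t, g r) (a b : E) :
    G ‖b‖ + G ‖a‖ - 2 * G ‖midpoint ℝ a b‖ ≤
      1 / 2 * ⟪g ‖b‖ • NormedSpace.normalize b - g ‖a‖ • NormedSpace.normalize a, b - a⟫_ℝ := by
  have ha := add_inner_smul_normalize_sub_le_comp_norm hg₀ hmono hG a (midpoint ℝ a b)
  have hb := add_inner_smul_normalize_sub_le_comp_norm hg₀ hmono hG b (midpoint ℝ a b)
  rw [midpoint_sub_left, real_inner_smul_right, invOf_eq_inv] at ha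
  rw [midpoint_sub_right, ← neg_sub b a, smul_neg, inner_neg_right, real_inner_smul_right,
    invOf_eq_inv] at hb
  rw [inner_sub_left]
  linarith

end InnerProductSpace

/-- Convexity inequality used in Lemma 4.2: for a convex differentiable Young function,
`(1/2)(g(|b|) sgn b − g(|a|) sgn a)(b − a) ≥ G(|b|) + G(|a|) − 2 G(|(a+b)/2|)`. -/
theorem convexity_inequality (G g : ℝ → ℝ)
    (hY : IsYoung G g)
    (hconv : ConvexOn ℝ (Set.Ici 0) G)
    (hdiff : ∀ t : ℝ, 0 < t → HasDerivAt G (g t) t) :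
    ∀ a b : ℝ,
      (1 / 2) * ((g |b| * Real.sign b - g |a| * Real.sign a) * (b - a)) ≥
        G |b| + G |a| - 2 * G |(a + b) / 2| := by
  intro a b
  simpa [real_normalize_eq_sign, midpoint_eq_smul_add, div_eq_inv_mul, mul_comm, mul_left_comm]
    using convexity_inequality_general hY.g_zero.ge hY.g_mono hY.G_eq a b
end

section
/- Let G be a Young function with G' = g such that p⁻ ≤ t·g(t)/G(t) ≤ p⁺ for all t > 0, where 1 < p⁻ ≤ p⁺ < ∞. Let s ∈ (0,1) and let u : ℝⁿ → ℝ be measurable with 0 < [u]_{s,G} < ∞. Then p⁻ ≤ (1 − s)·∬_{ℝⁿ×ℝⁿ} g(|D_s u(x,y)|/[u]_{s,G})·(|D_s u(x,y)|/[u]_{s,G}) dμ ≤ p⁺. -/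
open MeasureTheory Real Set

open scoped ENNReal

/-- The `s`-Hölder quotient `D_s u(x,y) = (u(x) − u(y))/|x − y|^s`. -/
noncomputable def Ds (n : ℕ) (s : ℝ) (u : EuclideanSpace ℝ (Fin n) → ℝ)
    (x y : EuclideanSpace ℝ (Fin n)) : ℝ :=
  (u x - u y) / ‖x - y‖ ^ s

/-- The Gagliardo modular `Φ_{s,G}(u) = (1−s)∬ G(|D_s u|) |x−y|^{−n} dx dy`. -/
noncomputable def fracModular (n : ℕ) (s : ℝ) (G : ℝ → ℝ)
    (u : EuclideanSpace ℝ (Fin n) → ℝ) : ℝ≥0∞ :=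
  ENNReal.ofReal (1 - s) *
    ∫⁻ p : EuclideanSpace ℝ (Fin n) × EuclideanSpace ℝ (Fin n),
      ENNReal.ofReal (G |Ds n s u p.1 p.2| * ‖p.1 - p.2‖ ^ (-(n : ℝ)))

/-- The Gagliardo–Luxemburg seminorm `[u]_{s,G} = inf {τ > 0 : Φ_{s,G}(u/τ) ≤ 1}`. -/
noncomputable def fracSeminorm (n : ℕ) (s : ℝ) (G : ℝ → ℝ)
    (u : EuclideanSpace ℝ (Fin n) → ℝ) : ℝ :=
  sInf {τ : ℝ | 0 < τ ∧ fracModular n s G (fun x => u x / τ) ≤ 1}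

/-!
Everything happens in the Orlicz setting over an arbitrary measure. Since `G` is convex with slope
at most `g t` to the left of `t`, the bound `t * g t ≤ p * G t` gives
`(1 - p * (1 - θ)) * G t ≤ G (θ * t)` for `θ ∈ [0, 1]`. Integrating and letting `θ → 1` shows that
the modular of `f / τ` cannot jump at `τ = ‖f‖`, so it equals `1` there. Integrating
`pm * G t ≤ g t * t ≤ pp * G t` at `t = |f| / ‖f‖` then yields the two bounds, and the Gagliardo
modular is the Orlicz modular of `D_s u` for a weighted measure on pairs.
-/

namespace IsYoung

variable {G g : ℝ → ℝ} {a b p t θ : ℝ}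

theorem intervalIntegrable_density (hY : IsYoung G g) (ha : 0 ≤ a) (hb : 0 ≤ b) :
    IntervalIntegrable g volume a b :=
  (hY.g_mono.mono fun _ hx => (le_min ha hb).trans hx.1).intervalIntegrable

theorem sub_eq_integral (hY : IsYoung G g) (ha : 0 ≤ a) (hb : 0 ≤ b) :
    G b - G a = ∫ r in a..b, g r := by
  rw [hY.G_eq a ha, hY.G_eq b hb, intervalIntegral.integral_interval_sub_left
    (hY.intervalIntegrable_density le_rfl hb) (hY.intervalIntegrable_density le_rfl ha)]

theorem apply_zero (hY : IsYoung G g) : G 0 = 0 := by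
  rw [hY.G_eq 0 le_rfl, intervalIntegral.integral_same]

theorem apply_pos (hY : IsYoung G g) (ht : 0 < t) : 0 < G t := by
  rw [hY.G_eq t ht.le]
  exact intervalIntegral.intervalIntegral_pos_of_pos_on
    (hY.intervalIntegrable_density le_rfl ht.le) (fun r hr => hY.g_pos r hr.1) ht

theorem apply_nonneg (hY : IsYoung G g) (ht : 0 ≤ t) : 0 ≤ G t := by
  rcases ht.eq_or_lt with rfl | ht
  · exact hY.apply_zero.ge
  · exact (hY.apply_pos ht).le

theorem monotoneOn (hY : IsYoung G g) : MonotoneOn G (Ici 0) := by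
  intro a ha b hb hab
  rw [← sub_nonneg, hY.sub_eq_integral ha hb]
  exact intervalIntegral.integral_nonneg hab fun r hr => hY.g_nonneg r (ha.trans hr.1)

theorem sub_le_mul_density (hY : IsYoung G g) (ha : 0 ≤ a) (hab : a ≤ b) :
    G b - G a ≤ (b - a) * g b := by
  have hb : 0 ≤ b := ha.trans hab
  calc
    G b - G a = ∫ r in a..b, g r := hY.sub_eq_integral ha hb
    _ ≤ ∫ _ in a..b, g b :=
      intervalIntegral.integral_mono_on hab (hY.intervalIntegrable_density ha hb)
        intervalIntegrable_const fun r hr => hY.g_mono (ha.trans hr.1) hb hr.2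
    _ = (b - a) * g b := by rw [intervalIntegral.integral_const, smul_eq_mul]

theorem mul_le_density_mul (hY : IsYoung G g) (hp : ∀ t : ℝ, 0 < t → p ≤ t * g t / G t)
    (ht : 0 ≤ t) : p * G t ≤ g t * t := by
  rcases ht.eq_or_lt with rfl | ht
  · simp [hY.apply_zero]
  · rw [mul_comm (g t), ← le_div_iff₀ (hY.apply_pos ht)]
    exact hp t ht

theorem density_mul_le_mul (hY : IsYoung G g) (hp : ∀ t : ℝ, 0 < t → t * g t / G t ≤ p)
    (ht : 0 ≤ t) : g t * t ≤ p * G t := by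
  rcases ht.eq_or_lt with rfl | ht
  · simp [hY.apply_zero]
  · rw [mul_comm (g t), ← div_le_iff₀ (hY.apply_pos ht)]
    exact hp t ht

theorem one_sub_mul_mul_le (hY : IsYoung G g) (hp : ∀ t : ℝ, 0 < t → t * g t / G t ≤ p)
    (hθ : θ ∈ Icc 0 1) (ht : 0 ≤ t) : (1 - p * (1 - θ)) * G t ≤ G (θ * t) := by
  have hdrop : G t - G (θ * t) ≤ (1 - θ) * (p * G t) :=
    calc
      G t - G (θ * t) ≤ (t - θ * t) * g t :=
        hY.sub_le_mul_density (mul_nonneg hθ.1 ht) (mul_le_of_le_one_left ht hθ.2)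
      _ = (1 - θ) * (g t * t) := by ring
      _ ≤ (1 - θ) * (p * G t) :=
        mul_le_mul_of_nonneg_left (hY.density_mul_le_mul hp ht) (sub_nonneg.2 hθ.2)
  linarith

end IsYoung

section Orlicz

variable {α : Type*} [MeasurableSpace α] {μ : Measure α} {G g : ℝ → ℝ} {f h : α → ℝ}
  {p pm pp τ θ : ℝ}

/-- The Orlicz modular `∫ G(|f|) dμ`, a lower integral when `f` is not measurable. -/
noncomputable def orliczModular (G : ℝ → ℝ) (μ : Measure α) (f : α → ℝ) : ℝ≥0∞ :=
  ∫⁻ x, ENNReal.ofReal (G |f x|) ∂μ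

/-- The Luxemburg norm `inf {τ > 0 : ∫ G(|f| / τ) dμ ≤ 1}`. Being real-valued, it is `0` rather
than `∞` when no `τ` is admissible. -/
noncomputable def luxemburgNorm (G : ℝ → ℝ) (μ : Measure α) (f : α → ℝ) : ℝ :=
  sInf {τ : ℝ | 0 < τ ∧ orliczModular G μ (fun x => f x / τ) ≤ 1}

theorem orliczModular_mono (hG : MonotoneOn G (Ici 0)) (hfh : ∀ x, |f x| ≤ |h x|) :
    orliczModular G μ f ≤ orliczModular G μ h :=
  lintegral_mono fun x =>
    ENNReal.ofReal_le_ofReal (hG (mem_Ici.2 (abs_nonneg _)) (mem_Ici.2 (abs_nonneg _)) (hfh x))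

theorem one_lt_orliczModular_div (hτ : 0 < τ) (hlt : τ < luxemburgNorm G μ f) :
    1 < orliczModular G μ (fun x => f x / τ) := by
  by_contra! hle
  exact notMem_of_lt_csInf hlt ⟨0, fun _ hσ => hσ.1.le⟩ ⟨hτ, hle⟩

theorem orliczModular_div_le_one (hG : MonotoneOn G (Ici 0)) (hf : 0 < luxemburgNorm G μ f)
    (hlt : luxemburgNorm G μ f < τ) : orliczModular G μ (fun x => f x / τ) ≤ 1 := by
  have hne : {σ : ℝ | 0 < σ ∧ orliczModular G μ (fun x => f x / σ) ≤ 1}.Nonempty := by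
    by_contra! hempty
    rw [luxemburgNorm, hempty, Real.sInf_empty] at hf
    exact hf.false
  obtain ⟨σ, ⟨hσ, hσ_le⟩, hστ⟩ := exists_lt_of_csInf_lt hne hlt
  refine (orliczModular_mono hG fun x => ?_).trans hσ_le
  rw [abs_div, abs_div, abs_of_pos hσ, abs_of_pos (hσ.trans hστ)]
  gcongr

open Filter Topology in
theorem le_of_forall_ofReal_one_sub_mul_le {a b : ℝ≥0∞}
    (hab : ∀ θ ∈ Ioo (0 : ℝ) 1, ENNReal.ofReal (1 - p * (1 - θ)) * a ≤ b) : a ≤ b := by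
  have hcont : Continuous fun θ : ℝ => ENNReal.ofReal (1 - p * (1 - θ)) :=
    ENNReal.continuous_ofReal.comp (by fun_prop)
  have hlim : Tendsto (fun θ : ℝ => ENNReal.ofReal (1 - p * (1 - θ)) * a) (𝓝[<] 1) (𝓝 a) := by
    simpa using ENNReal.Tendsto.mul_const
      ((hcont.tendsto 1).mono_left nhdsWithin_le_nhds) (Or.inl (by simp))
  exact le_of_tendsto hlim (eventually_of_mem (Ioo_mem_nhdsLT one_pos) hab)

namespace IsYoung

theorem ofReal_one_sub_mul_orliczModular_le (hY : IsYoung G g)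
    (hp : ∀ t : ℝ, 0 < t → t * g t / G t ≤ p) (hθ : θ ∈ Icc 0 1) :
    ENNReal.ofReal (1 - p * (1 - θ)) * orliczModular G μ f ≤
      orliczModular G μ (fun x => θ * f x) := by
  rw [orliczModular, ← lintegral_const_mul' _ _ ENNReal.ofReal_ne_top]
  refine lintegral_mono fun x => ?_
  rw [← ENNReal.ofReal_mul' (hY.apply_nonneg (abs_nonneg _)), abs_mul, abs_of_nonneg hθ.1]
  exact ENNReal.ofReal_le_ofReal (hY.one_sub_mul_mul_le hp hθ (abs_nonneg _))

theorem orliczModular_div_luxemburgNorm_eq_one (hY : IsYoung G g)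
    (hp : ∀ t : ℝ, 0 < t → t * g t / G t ≤ p) (hf : 0 < luxemburgNorm G μ f) :
    orliczModular G μ (fun x => f x / luxemburgNorm G μ f) = 1 := by
  set N := luxemburgNorm G μ f
  apply le_antisymm <;> refine le_of_forall_ofReal_one_sub_mul_le (p := p) fun θ hθ => ?_
  · have hN : N < N / θ := (lt_div_iff₀ hθ.1).2 (mul_lt_of_lt_one_right hf hθ.2)
    calc
      ENNReal.ofReal (1 - p * (1 - θ)) * orliczModular G μ (fun x => f x / N)
        ≤ orliczModular G μ (fun x => θ * (f x / N)) :=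
          hY.ofReal_one_sub_mul_orliczModular_le hp (Ioo_subset_Icc_self hθ)
      _ = orliczModular G μ (fun x => f x / (N / θ)) := by
          simp only [div_div_eq_mul_div, mul_comm θ, div_mul_eq_mul_div]
      _ ≤ 1 := orliczModular_div_le_one hY.monotoneOn hf hN
  · have hN : 1 < orliczModular G μ (fun x => f x / (θ * N)) :=
      one_lt_orliczModular_div (mul_pos hθ.1 hf) (mul_lt_of_lt_one_left hf hθ.2)
    calc
      ENNReal.ofReal (1 - p * (1 - θ)) * 1
        ≤ ENNReal.ofReal (1 - p * (1 - θ)) * orliczModular G μ (fun x => f x / (θ * N)) := by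
          gcongr
      _ ≤ orliczModular G μ (fun x => θ * (f x / (θ * N))) :=
          hY.ofReal_one_sub_mul_orliczModular_le hp (Ioo_subset_Icc_self hθ)
      _ = orliczModular G μ (fun x => f x / N) := by
          simp only [← mul_div_assoc, mul_div_mul_left _ _ hθ.1.ne']

theorem ofReal_mul_orliczModular_le_lintegral_density (hY : IsYoung G g)
    (hp : ∀ t : ℝ, 0 < t → p ≤ t * g t / G t) :
    ENNReal.ofReal p * orliczModular G μ f ≤ ∫⁻ x, ENNReal.ofReal (g |f x| * |f x|) ∂μ := by
  rw [orliczModular, ← lintegral_const_mul' _ _ ENNReal.ofReal_ne_top]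
  refine lintegral_mono fun x => ?_
  rw [← ENNReal.ofReal_mul' (hY.apply_nonneg (abs_nonneg _))]
  exact ENNReal.ofReal_le_ofReal (hY.mul_le_density_mul hp (abs_nonneg _))

theorem lintegral_density_le_ofReal_mul_orliczModular (hY : IsYoung G g)
    (hp : ∀ t : ℝ, 0 < t → t * g t / G t ≤ p) :
    ∫⁻ x, ENNReal.ofReal (g |f x| * |f x|) ∂μ ≤ ENNReal.ofReal p * orliczModular G μ f := by
  rw [orliczModular, ← lintegral_const_mul' _ _ ENNReal.ofReal_ne_top]
  refine lintegral_mono fun x => ?_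
  rw [← ENNReal.ofReal_mul' (hY.apply_nonneg (abs_nonneg _))]
  exact ENNReal.ofReal_le_ofReal (hY.density_mul_le_mul hp (abs_nonneg _))

theorem lintegral_density_div_luxemburgNorm_mem_Icc (hY : IsYoung G g)
    (hratio : ∀ t : ℝ, 0 < t → pm ≤ t * g t / G t ∧ t * g t / G t ≤ pp)
    (hf : 0 < luxemburgNorm G μ f) :
    ∫⁻ x, ENNReal.ofReal (g (|f x| / luxemburgNorm G μ f) * (|f x| / luxemburgNorm G μ f)) ∂μ ∈
      Icc (ENNReal.ofReal pm) (ENNReal.ofReal pp) := by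
  have hpm : ∀ t : ℝ, 0 < t → pm ≤ t * g t / G t := fun t ht => (hratio t ht).1
  have hpp : ∀ t : ℝ, 0 < t → t * g t / G t ≤ pp := fun t ht => (hratio t ht).2
  have habs (x : α) : |f x / luxemburgNorm G μ f| = |f x| / luxemburgNorm G μ f := by
    rw [abs_div, abs_of_pos hf]
  have hone := hY.orliczModular_div_luxemburgNorm_eq_one hpp hf
  have hlower := hY.ofReal_mul_orliczModular_le_lintegral_density (μ := μ)
    (f := fun x => f x / luxemburgNorm G μ f) hpm
  have hupper := hY.lintegral_density_le_ofReal_mul_orliczModular (μ := μ)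
    (f := fun x => f x / luxemburgNorm G μ f) hpp
  simp only [hone, mul_one, habs] at hlower hupper
  exact ⟨hlower, hupper⟩

end IsYoung

end Orlicz

section Gagliardo

variable {n : ℕ} {s : ℝ} {G : ℝ → ℝ} {u : EuclideanSpace ℝ (Fin n) → ℝ}

/-- The measure `(1 - s) |x - y|⁻ⁿ dx dy` on pairs of points, for which the Gagliardo modular of `u`
is the Orlicz modular of `D_s u`. -/
noncomputable def gagliardoMeasure (n : ℕ) (s : ℝ) :
    Measure (EuclideanSpace ℝ (Fin n) × EuclideanSpace ℝ (Fin n)) :=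
  ENNReal.ofReal (1 - s) •
    volume.withDensity fun p => ENNReal.ofReal (‖p.1 - p.2‖ ^ (-(n : ℝ)))

theorem lintegral_ofReal_gagliardoMeasure
    (F : EuclideanSpace ℝ (Fin n) × EuclideanSpace ℝ (Fin n) → ℝ) :
    ∫⁻ p, ENNReal.ofReal (F p) ∂gagliardoMeasure n s =
      ENNReal.ofReal (1 - s) * ∫⁻ p, ENNReal.ofReal (F p * ‖p.1 - p.2‖ ^ (-(n : ℝ))) := by
  have hweight : Measurable fun p : EuclideanSpace ℝ (Fin n) × EuclideanSpace ℝ (Fin n) =>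
      ENNReal.ofReal (‖p.1 - p.2‖ ^ (-(n : ℝ))) := by fun_prop
  rw [gagliardoMeasure, lintegral_smul_measure, smul_eq_mul,
    lintegral_withDensity_eq_lintegral_mul_non_measurable _ hweight
      (ae_of_all _ fun _ => ENNReal.ofReal_lt_top)]
  refine congrArg (ENNReal.ofReal (1 - s) * ·) (lintegral_congr fun p => ?_)
  rw [Pi.mul_apply, ENNReal.ofReal_mul' (by positivity), mul_comm]

theorem fracModular_eq_orliczModular :
    fracModular n s G u = orliczModular G (gagliardoMeasure n s) fun p => Ds n s u p.1 p.2 :=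
  (lintegral_ofReal_gagliardoMeasure _).symm

theorem Ds_div_const (τ : ℝ) (x y : EuclideanSpace ℝ (Fin n)) :
    Ds n s (fun z => u z / τ) x y = Ds n s u x y / τ := by
  rw [Ds, Ds, ← sub_div, div_right_comm]

theorem fracSeminorm_eq_luxemburgNorm :
    fracSeminorm n s G u =
      luxemburgNorm G (gagliardoMeasure n s) fun p => Ds n s u p.1 p.2 := by
  simp only [fracSeminorm, luxemburgNorm, fracModular_eq_orliczModular, Ds_div_const]

end Gagliardo

theorem frac_density_modular_bounds_general (n : ℕ) (G g : ℝ → ℝ) (pm pp : ℝ)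
    (hY : IsYoung G g) (hratio : ∀ t : ℝ, 0 < t → pm ≤ t * g t / G t ∧ t * g t / G t ≤ pp)
    (s : ℝ) (u : EuclideanSpace ℝ (Fin n) → ℝ) (hpos : 0 < fracSeminorm n s G u) :
    ENNReal.ofReal pm ≤
      ENNReal.ofReal (1 - s) *
        ∫⁻ p : EuclideanSpace ℝ (Fin n) × EuclideanSpace ℝ (Fin n),
          ENNReal.ofReal (g (|Ds n s u p.1 p.2| / fracSeminorm n s G u) *
            (|Ds n s u p.1 p.2| / fracSeminorm n s G u) * ‖p.1 - p.2‖ ^ (-(n : ℝ))) ∧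
    ENNReal.ofReal (1 - s) *
        ∫⁻ p : EuclideanSpace ℝ (Fin n) × EuclideanSpace ℝ (Fin n),
          ENNReal.ofReal (g (|Ds n s u p.1 p.2| / fracSeminorm n s G u) *
            (|Ds n s u p.1 p.2| / fracSeminorm n s G u) * ‖p.1 - p.2‖ ^ (-(n : ℝ))) ≤
      ENNReal.ofReal pp := by
  rw [fracSeminorm_eq_luxemburgNorm] at hpos ⊢
  simpa only [lintegral_ofReal_gagliardoMeasure, mem_Icc] using
    hY.lintegral_density_div_luxemburgNorm_mem_Icc hratio hpos

/-- Bounds for the normalized Gagliardo energy of the density: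
`p⁻ ≤ (1−s)∬ g(|D_s u|/[u]_{s,G})(|D_s u|/[u]_{s,G}) dμ ≤ p⁺`. -/
theorem frac_density_modular_bounds (n : ℕ) (G g : ℝ → ℝ) (pm pp : ℝ)
    (hY : IsYoung G g) (hpm : 1 < pm) (hpmpp : pm ≤ pp)
    (hratio : ∀ t : ℝ, 0 < t → pm ≤ t * g t / G t ∧ t * g t / G t ≤ pp)
    (s : ℝ) (hs : s ∈ Set.Ioo (0:ℝ) 1)
    (u : EuclideanSpace ℝ (Fin n) → ℝ) (hu : Measurable u)
    (hfin : ∃ τ : ℝ, 0 < τ ∧ fracModular n s G (fun x => u x / τ) ≤ 1)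
    (hpos : 0 < fracSeminorm n s G u) :
    ENNReal.ofReal pm ≤
      ENNReal.ofReal (1 - s) *
        ∫⁻ p : EuclideanSpace ℝ (Fin n) × EuclideanSpace ℝ (Fin n),
          ENNReal.ofReal (g (|Ds n s u p.1 p.2| / fracSeminorm n s G u) *
            (|Ds n s u p.1 p.2| / fracSeminorm n s G u) * ‖p.1 - p.2‖ ^ (-(n : ℝ))) ∧
    ENNReal.ofReal (1 - s) *
        ∫⁻ p : EuclideanSpace ℝ (Fin n) × EuclideanSpace ℝ (Fin n),
          ENNReal.ofReal (g (|Ds n s u p.1 p.2| / fracSeminorm n s G u) *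
            (|Ds n s u p.1 p.2| / fracSeminorm n s G u) * ‖p.1 - p.2‖ ^ (-(n : ℝ))) ≤
      ENNReal.ofReal pp := by
  exact frac_density_modular_bounds_general n G g pm pp hY hratio s u hpos
end
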